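/- Let 0 < α < 1 and 0 < ζ < 1 − α. Let h(x,y) = φ(x−y) be a translation-invariant kernel on ℝ^d with symmetric positive definite φ, satisfying 0 ≤ h ≤ B, and suppose there exist z ∈ ℝ^d and κ_1 > 0 with φ(0) − φ(z) ≥ κ_1. Consider a sequence of configurations indexed by m in which n_min^{(m)} → ∞, K^{(m)} → ∞, the sample sizes satisfy n_max/n_min ≤ c for a fixed c ≥ 1, and r_N^* := √(log K / n_min) ≤ κ_2 for a fixed κ_2 > 0. Then there exists a constant b > 0 such that liminf_m inf_{φ_test ∈ Φ_N(α)} sup_{(P_1,…,P_K) ∈ F_h(b r_N^*)} P(φ_test = 0) ≥ ζ, where Φ_N(α) is the set of all measurable {0,1}-valued functions of the pooled data whose rejection probability is at most α whenever P_1 = ⋯ = P_K, and F_h(ε) is the set of K-tuples of distributions with max_{1≤k<l≤K} V_h(P_k,P_l) ≥ ε. -/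

import Mathlib

open Finset MeasureTheory Filter

/-!
The bound is Ingster's second-moment (χ²) method with two-point distributions.

Put `P_a = (1 + a)/2 · δ_0 + (1 - a)/2 · δ_z`. The squared MMD between `P_a` and `P_{a'}` equals
`(a - a')² / 2 · (φ₀ 0 - φ₀ z) ≥ (a - a')² κ₁ / 2`, so a single group drawn from `P_a` while the
others are drawn from `P_0` is an alternative at separation `|a| √(κ₁ / 2)`. Take `a = t · r m` and
`b = t √(κ₁ / 2)` for a small constant `t`.

For every test, the worst-case type II error dominates the average over the `K` positions of the
anomalous group. Relative to the null `P_0^{⊗N}`, the likelihood ratios `L_k` of these `K`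
alternatives satisfy `E L_k = 1`, `E L_k L_l = 1` for `k ≠ l`, and `E L_k² = (1 + a²)^{n_k}`.
Hence the mixture `L = K⁻¹ ∑ L_k` has `E (L - 1)² ≤ K⁻¹ max_k (1 + a²)^{n_k}`. Since
`(1 + a²)^{n_k} ≤ exp (a² c n_min) = K^{t² c} ≤ K^{1/2}`, this tends to `0`, and by Cauchy–Schwarz
the average type II error is at least `1 - α - K^{-1/4}`, which eventually exceeds `ζ`.

All the laws involved are images of laws on the finite cube `I → Bool`, so the second moment is a
computation with finite sums.
-/

/-! ### Two-point laws and their MMD -/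

/-- The sign of a bit: `1` for `true` and `-1` for `false`. -/
def bitSign (b : Bool) : ℝ := if b then 1 else -1

/-- The law on `E` giving mass `(1 + a) / 2` to `u` and `(1 - a) / 2` to `v`; it is a probability
measure when `-1 ≤ a ≤ 1`. -/
noncomputable def twoPoint {E : Type*} [MeasurableSpace E] (u v : E) (a : ℝ) : Measure E :=
  ENNReal.ofReal ((1 + a) / 2) • Measure.dirac u + ENNReal.ofReal ((1 - a) / 2) • Measure.dirac v

lemma twoPoint_isProb {E : Type*} [MeasurableSpace E] (u v : E) {a : ℝ} (h1 : -1 ≤ a)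
    (h2 : a ≤ 1) : IsProbabilityMeasure (twoPoint u v a) := by
  constructor
  simp only [twoPoint, Measure.coe_add, Measure.coe_smul, Pi.add_apply, Pi.smul_apply,
    measure_univ, smul_eq_mul, mul_one]
  rw [← ENNReal.ofReal_add (by linarith) (by linarith)]
  ring_nf
  simp

lemma twoPoint_map {E F : Type*} [MeasurableSpace E] [MeasurableSpace F] (u v : E) (a : ℝ)
    (f : E → F) (hf : Measurable f) :
    (twoPoint u v a).map f = twoPoint (f u) (f v) a := by
  rw [twoPoint, twoPoint, Measure.map_add _ _ hf, Measure.map_smul, Measure.map_smul,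
    Measure.map_dirac' hf, Measure.map_dirac' hf]

lemma integral_twoPoint {E : Type*} [MeasurableSpace E] [MeasurableSingletonClass E]
    (u v : E) {a : ℝ} (h1 : -1 ≤ a) (h2 : a ≤ 1) (f : E → ℝ) :
    ∫ x, f x ∂(twoPoint u v a) = (1 + a) / 2 * f u + (1 - a) / 2 * f v := by
  have hi : ∀ (p : ℝ) (w : E), Integrable f (ENNReal.ofReal p • Measure.dirac w) := fun p w =>
    (integrable_dirac (by simp)).smul_measure ENNReal.ofReal_ne_top
  rw [twoPoint, integral_add_measure (hi _ _) (hi _ _), integral_smul_measure,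
    integral_smul_measure, integral_dirac, integral_dirac,
    ENNReal.toReal_ofReal (by linarith), ENNReal.toReal_ofReal (by linarith)]
  simp

/-- The squared MMD between two laws on the same pair of points `0`, `z`. -/
lemma mmd_twoPoint {d : ℕ} (φ₀ : (Fin d → ℝ) → ℝ) (hsymm : ∀ x, φ₀ (-x) = φ₀ x) (z : Fin d → ℝ)
    {a a' : ℝ} (h1 : -1 ≤ a) (h2 : a ≤ 1) (h1' : -1 ≤ a') (h2' : a' ≤ 1) :
    (∫ x, ∫ y, φ₀ (x - y) ∂(twoPoint 0 z a) ∂(twoPoint 0 z a))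
      + (∫ x, ∫ y, φ₀ (x - y) ∂(twoPoint 0 z a') ∂(twoPoint 0 z a'))
      - 2 * ∫ x, ∫ y, φ₀ (x - y) ∂(twoPoint 0 z a') ∂(twoPoint 0 z a)
      = (a - a') ^ 2 / 2 * (φ₀ 0 - φ₀ z) := by
  simp only [integral_twoPoint 0 z h1 h2, integral_twoPoint 0 z h1' h2', sub_zero, zero_sub,
    sub_self, hsymm]
  ring

/-! ### Second moment of the averaged likelihood ratio -/

lemma twoPoint_bool_singleton {a : ℝ} (h1 : -1 ≤ a) (h2 : a ≤ 1) (b : Bool) :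
    (twoPoint true false a).real {b} = (1 + a * bitSign b) / 2 := by
  have e1 : 0 ≤ (1 + a) / 2 := by linarith
  have e2 : 0 ≤ (1 - a) / 2 := by linarith
  cases b
  · simp [twoPoint, bitSign, Measure.real, ENNReal.toReal_ofReal e2, ← sub_eq_add_neg]
  · simp [twoPoint, bitSign, Measure.real, ENNReal.toReal_ofReal e1]

section Cube

variable {I : Type*} [Fintype I] [DecidableEq I]

lemma pi_twoPoint_real (a : I → ℝ) (h1 : ∀ i, -1 ≤ a i) (h2 : ∀ i, a i ≤ 1)
    (A : Set (I → Bool)) :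
    (Measure.pi fun i => twoPoint true false (a i)).real A
      = ∑ x, (∏ i, (1 + a i * bitSign (x i)) / 2) * A.indicator 1 x := by
  classical
  have : ∀ i, IsProbabilityMeasure (twoPoint true false (a i)) :=
    fun i => twoPoint_isProb _ _ (h1 i) (h2 i)
  have hA : A = ((Finset.univ.filter (· ∈ A) : Finset (I → Bool)) : Set (I → Bool)) := by
    ext; simp
  conv_lhs => rw [hA]
  rw [← sum_measureReal_singleton, Finset.sum_filter]
  refine Finset.sum_congr rfl fun x _ => ?_
  have : (Measure.pi fun i => twoPoint true false (a i)).real {x}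
      = ∏ i, (1 + a i * bitSign (x i)) / 2 := by
    rw [Measure.real, Measure.pi_singleton, ENNReal.toReal_prod]
    exact Finset.prod_congr rfl fun i _ => twoPoint_bool_singleton (h1 i) (h2 i) _
  by_cases hx : x ∈ A <;> simp [hx, this]

/-- Uniform average over the cube `I → Bool` of the product of two likelihood ratios. -/
lemma cube_sum_mul (a a' : I → ℝ) :
    ∑ x : I → Bool, (∏ _i : I, (1 / 2 : ℝ)) *
      ((∏ i, (1 + a i * bitSign (x i))) * ∏ i, (1 + a' i * bitSign (x i)))
      = ∏ i, (1 + a i * a' i) := by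
  simp only [← Finset.prod_mul_distrib]
  have := Finset.prod_univ_sum (fun _ : I => (Finset.univ : Finset Bool))
    (fun i b => (1 / 2 : ℝ) * ((1 + a i * bitSign b) * (1 + a' i * bitSign b)))
  rw [Fintype.piFinset_univ] at this
  rw [← this]
  refine Finset.prod_congr rfl fun i _ => ?_
  simp [bitSign]
  ring

end Cube

/-- The second-moment bound: over the cube, the average over `k` of the probabilities of `A` when
the coordinates of group `k` are biased by `a` is at least the uniform probability of `A` minus the
`L²` distance between `1` and the average likelihood ratio. -/
lemma cube_average_ge {K : ℕ} (hK : 0 < K) (n : Fin K → ℕ) {a M : ℝ} (h1 : -1 ≤ a) (h2 : a ≤ 1)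
    (hM : ∀ k, (1 + a ^ 2) ^ n k ≤ M) (A : Set ((Σ k : Fin K, Fin (n k)) → Bool)) :
    (Measure.pi fun _ : Σ k : Fin K, Fin (n k) => twoPoint true false 0).real A - √(M / K)
      ≤ (∑ k, (Measure.pi fun i : Σ k : Fin K, Fin (n k) =>
          twoPoint true false (if i.1 = k then a else 0)).real A) / K := by
  classical
  have hK' : (0 : ℝ) < K := by exact_mod_cast hK
  let I := Σ k : Fin K, Fin (n k)
  let q : ℝ := ∏ _i : I, (1 / 2 : ℝ)
  have hq : 0 ≤ q := Finset.prod_nonneg fun _ _ => by norm_num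
  -- likelihood ratio of the alternative with anomalous group `k`
  let L : Fin K → (I → Bool) → ℝ := fun k x =>
    ∏ i, (1 + (if i.1 = k then a else 0) * bitSign (x i))
  let T : (I → Bool) → ℝ := A.indicator 1
  have hT : ∀ x, T x = 0 ∨ T x = 1 := fun x => by
    by_cases hx : x ∈ A <;> simp [T, hx]
  have hone : ∑ _x : I → Bool, q = 1 := by
    simp [q]
  have hL1 : ∀ k, ∑ x, q * L k x = 1 := fun k => by
    have := cube_sum_mul (I := I) (fun i => if i.1 = k then a else 0) (fun _ => 0)
    simpa [q, L] using this
  have hLL : ∀ k l, ∑ x, q * (L k x * L l x) = if k = l then (1 + a ^ 2) ^ n k else 1 := by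
    intro k l
    have := cube_sum_mul (I := I) (fun i => if i.1 = k then a else 0)
      (fun i => if i.1 = l then a else 0)
    refine this.trans ?_
    rw [Fintype.prod_sigma]
    split_ifs with hkl
    · subst hkl
      rw [Finset.prod_eq_single k]
      · simp [sq]
      · intro j _ hj
        simp [hj]
      · simp
    · refine Finset.prod_eq_one fun j _ => Finset.prod_eq_one fun y _ => ?_
      by_cases hj : j = k
      · simp [hj, hkl]
      · simp [hj]
  -- averaged likelihood ratio, centred at its null mean
  let G : (I → Bool) → ℝ := fun x => (∑ k, L k x) / K - 1
  have hsecond : ∑ x, q * G x ^ 2 ≤ M / K := by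
    have hexp : ∑ x, q * G x ^ 2
        = (∑ k, ∑ l, ∑ x, q * (L k x * L l x)) / K ^ 2 - 2 * (∑ k, ∑ x, q * L k x) / K
          + ∑ _x : I → Bool, q := by
      have e1 : ∑ k, ∑ l, ∑ x, q * (L k x * L l x) = ∑ x, q * (∑ k, L k x) ^ 2 := by
        have : ∀ x, q * (∑ k, L k x) ^ 2 = ∑ k, ∑ l, q * (L k x * L l x) := fun x => by
          rw [sq, Finset.sum_mul_sum, Finset.mul_sum]
          exact Finset.sum_congr rfl fun k _ => Finset.mul_sum _ _ _
        simp only [this]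
        rw [Finset.sum_comm (s := (Finset.univ : Finset (I → Bool)))]
        refine Finset.sum_congr rfl fun k _ => ?_
        rw [Finset.sum_comm]
      have e2 : ∑ k, ∑ x, q * L k x = ∑ x, q * ∑ k, L k x := by
        rw [Finset.sum_comm]
        exact Finset.sum_congr rfl fun x _ => (Finset.mul_sum _ _ _).symm
      rw [e1, e2, Finset.sum_div, Finset.mul_sum, Finset.sum_div, ← Finset.sum_sub_distrib,
        ← Finset.sum_add_distrib]
      refine Finset.sum_congr rfl fun x _ => ?_
      simp only [G]
      field_simp
      ring
    have hdiag : ∑ k, ∑ l, ∑ x, q * (L k x * L l x) ≤ K ^ 2 + K * M := by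
      calc ∑ k, ∑ l, ∑ x, q * (L k x * L l x)
          ≤ ∑ k : Fin K, ∑ l : Fin K, (1 + if k = l then M else 0) := by
            refine Finset.sum_le_sum fun k _ => Finset.sum_le_sum fun l _ => ?_
            rw [hLL]
            split_ifs
            · linarith [hM k]
            · simp
        _ = K ^ 2 + K * M := by
            simp [Finset.sum_add_distrib]
            ring
    rw [hexp, hone]
    simp only [hL1, Finset.sum_const, Finset.card_univ, Fintype.card_fin, nsmul_eq_mul, mul_one]
    have : (∑ k, ∑ l, ∑ x, q * (L k x * L l x)) / (K : ℝ) ^ 2 ≤ (K ^ 2 + K * M) / (K : ℝ) ^ 2 := by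
      gcongr
    have e3 : ((K : ℝ) ^ 2 + K * M) / (K : ℝ) ^ 2 = 1 + M / K := by field_simp
    have e4 : 2 * (K : ℝ) / K = 2 := by field_simp
    linarith
  have hcs : (∑ x, q * (G x * T x)) ^ 2 ≤ M / K := by
    have h := Finset.sum_mul_sq_le_sq_mul_sq Finset.univ (fun x => √q * G x) (fun x => √q * T x)
    have e1 : ∀ x, √q * G x * (√q * T x) = q * (G x * T x) := fun x => by
      linear_combination (G x * T x) * Real.mul_self_sqrt hq
    have e2 : ∀ y : ℝ, (√q * y) ^ 2 = q * y ^ 2 := fun y => by rw [mul_pow, Real.sq_sqrt hq]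
    simp only [e1, e2] at h
    have h3 : ∑ x, q * T x ^ 2 ≤ 1 := by
      rw [← hone]
      refine Finset.sum_le_sum fun x _ => ?_
      rcases hT x with h | h <;> simp [h, hq]
    have h4 : 0 ≤ ∑ x, q * G x ^ 2 := Finset.sum_nonneg fun x _ => by positivity
    calc _ ≤ _ := h
      _ ≤ (∑ x, q * G x ^ 2) * 1 := by gcongr
      _ ≤ _ := by linarith
  have hnull : (Measure.pi fun _ : I => twoPoint true false 0).real A = ∑ x, q * T x := by
    rw [pi_twoPoint_real (fun _ : I => 0) (by simp) (by simp)]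
    simp [q, T]
  have halt : ∀ k, (Measure.pi fun i : I =>
      twoPoint true false (if i.1 = k then a else 0)).real A = ∑ x, q * (L k x * T x) := by
    intro k
    rw [pi_twoPoint_real (fun i : I => if i.1 = k then a else 0)
      (fun i => by split_ifs <;> linarith)
      (fun i => by split_ifs <;> linarith)]
    refine Finset.sum_congr rfl fun x _ => ?_
    rw [← mul_assoc]
    congr 1
    simp only [q, L, ← Finset.prod_mul_distrib]
    exact Finset.prod_congr rfl fun i _ => by ring
  have hdiff : (∑ k, ∑ x, q * (L k x * T x)) / K - ∑ x, q * T x = ∑ x, q * (G x * T x) := by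
    rw [Finset.sum_comm, Finset.sum_div, ← Finset.sum_sub_distrib]
    refine Finset.sum_congr rfl fun x _ => ?_
    simp only [G]
    rw [← Finset.mul_sum, ← Finset.sum_mul]
    ring
  change (Measure.pi fun _ : I => twoPoint true false 0).real A - _ ≤
    (∑ k, (Measure.pi fun i : I => twoPoint true false (if i.1 = k then a else 0)).real A) / K
  rw [hnull, Finset.sum_congr rfl fun k _ => halt k]
  have := Real.abs_le_sqrt hcs
  have := (abs_le.1 this).1
  linarith

/-! ### Type II errors of level-`α` tests -/

/-- A product of two-point laws on `E` is an image of a product of two-point laws on bits. -/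
lemma pi_twoPoint_map {E I : Type*} [Fintype I] [MeasurableSpace E] (u v : E) (a : I → ℝ)
    (h1 : ∀ i, -1 ≤ a i) (h2 : ∀ i, a i ≤ 1) {A : Set (I → E)} (hA : MeasurableSet A) :
    (Measure.pi fun i => twoPoint u v (a i)).real A
      = (Measure.pi fun i => twoPoint true false (a i)).real
          ((fun x i => if x i = true then u else v) ⁻¹' A) := by
  have hm : ∀ i, (twoPoint true false (a i)).map (fun b : Bool => if b = true then u else v)
      = twoPoint u v (a i) := fun i => by
    rw [twoPoint_map _ _ _ _ (measurable_of_countable _)]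
    simp
  have : ∀ i, IsProbabilityMeasure (twoPoint u v (a i)) :=
    fun i => twoPoint_isProb _ _ (h1 i) (h2 i)
  have : ∀ i, SigmaFinite
      ((twoPoint true false (a i)).map (fun b : Bool => if b = true then u else v)) := fun i => by
    rw [hm]; infer_instance
  have := Measure.pi_map_pi (μ := fun i => twoPoint true false (a i))
    (f := fun _ (b : Bool) => if b = true then u else v)
    (fun i => (measurable_of_countable _).aemeasurable)
  simp only [hm] at this
  rw [← this, measureReal_def, measureReal_def, Measure.map_apply (by fun_prop) hA]

/-- For a level-`α` test, a lower bound on the average type II error over the `K` positions of a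
single anomalous two-point group. -/
lemma average_typeII_ge {E : Type*} [MeasurableSpace E] (u v : E) {K : ℕ} (hK : 0 < K)
    (n : Fin K → ℕ) {a M α : ℝ} (h1 : -1 ≤ a) (h2 : a ≤ 1)
    (hM : ∀ k, (1 + a ^ 2) ^ n k ≤ M)
    (T : ((Σ k : Fin K, Fin (n k)) → E) → Bool) (hT : Measurable T)
    (hlevel : ∀ Q : Measure E, IsProbabilityMeasure Q →
      ((Measure.pi fun _ : Σ k : Fin K, Fin (n k) => Q) {x | T x = true}).toReal ≤ α) :
    1 - α - √(M / K) ≤ (∑ k, ((Measure.pi fun i : Σ k : Fin K, Fin (n k) =>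
      twoPoint u v (if i.1 = k then a else 0)) {x | T x = false}).toReal) / K := by
  have hA : MeasurableSet {x | T x = false} := hT (measurableSet_singleton false)
  have := twoPoint_isProb u v (a := 0) (by norm_num) (by norm_num)
  have hnull := hlevel (twoPoint u v 0) inferInstance
  have hc : {x | T x = true} = {x | T x = false}ᶜ := by ext; simp
  have e := measureReal_compl
    (μ := Measure.pi fun _ : Σ k : Fin K, Fin (n k) => twoPoint u v 0) hA
  rw [← hc] at e
  rw [← measureReal_def, e, pi_twoPoint_map u v (fun _ => 0) (by simp) (by simp) hA] at hnull
  have key := cube_average_ge hK n h1 h2 hM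
    ((fun x i => if x i = true then u else v) ⁻¹' {x | T x = false})
  have hs : ∀ k, ((Measure.pi fun i : Σ k : Fin K, Fin (n k) =>
      twoPoint u v (if i.1 = k then a else 0)) {x | T x = false}).toReal = _ := fun k =>
    pi_twoPoint_map u v (fun i : Σ k : Fin K, Fin (n k) => if i.1 = k then a else 0)
      (fun i => by split_ifs <;> linarith)
      (fun i => by split_ifs <;> linarith) hA
  rw [Finset.sum_congr rfl fun k _ => hs k]
  simp only [probReal_univ] at hnull
  linarith

/-- Minimax lower bound: over sparse alternatives separated by `b·√(log K / n_min)` in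
MMD with a translation-invariant kernel, no level-α test can have worst-case type II
error below `ζ`, asymptotically. -/
theorem stmt11 (d : ℕ) (α ζ : ℝ) (hα0 : 0 < α) (hα1 : α < 1)
    (hζ0 : 0 < ζ) (hζ : ζ < 1 - α)
    (φ₀ : (Fin d → ℝ) → ℝ) (hφmeas : Measurable φ₀)
    (B : ℝ) (hB : ∀ x, 0 ≤ φ₀ x ∧ φ₀ x ≤ B)
    (hsymm : ∀ x, φ₀ (-x) = φ₀ x)
    (hpd : ∀ (r : ℕ) (x : Fin r → (Fin d → ℝ)) (cc : Fin r → ℝ),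
      0 ≤ ∑ i, ∑ j, cc i * cc j * φ₀ (x i - x j))
    (z : Fin d → ℝ) (κ₁ : ℝ) (hκ₁ : 0 < κ₁) (hgap : κ₁ ≤ φ₀ 0 - φ₀ z)
    (c : ℝ) (hc : 1 ≤ c) (κ₂ : ℝ) (hκ₂ : 0 < κ₂)
    (K : ℕ → ℕ) (hK2 : ∀ m, 2 ≤ K m)
    (n : (m : ℕ) → Fin (K m) → ℕ)
    (nmin nmax : ℕ → ℕ)
    (hnmin : ∀ m, IsLeast (Set.range (n m)) (nmin m))
    (hnmax : ∀ m, IsGreatest (Set.range (n m)) (nmax m))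
    (hminpos : ∀ m, 1 ≤ nmin m)
    (hntend : Tendsto nmin atTop atTop)
    (hKtend : Tendsto K atTop atTop)
    (hbal : ∀ m, (nmax m : ℝ) ≤ c * nmin m)
    (r : ℕ → ℝ) (hr : ∀ m, r m = Real.sqrt (Real.log (K m) / nmin m))
    (hrbd : ∀ m, r m ≤ κ₂)
    -- squared MMD of the translation-invariant kernel
    (Vh : Measure (Fin d → ℝ) → Measure (Fin d → ℝ) → ℝ)
    (hVh : ∀ P Q, Vh P Q = Real.sqrt ((∫ x, ∫ y, φ₀ (x - y) ∂P ∂P)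
        + (∫ x, ∫ y, φ₀ (x - y) ∂Q ∂Q) - 2 * ∫ x, ∫ y, φ₀ (x - y) ∂Q ∂P)) :
    ∃ b : ℝ, 0 < b ∧
      ζ ≤ liminf (fun m =>
        sInf {v : ℝ |
          ∃ φtest : ((Σ k : Fin (K m), Fin (n m k)) → (Fin d → ℝ)) → Bool,
            Measurable φtest ∧
            -- level α under every null configuration P₁ = ⋯ = P_K
            (∀ Q : Measure (Fin d → ℝ), IsProbabilityMeasure Q →
              ((Measure.pi fun _ : Σ k : Fin (K m), Fin (n m k) => Q)
                  {x | φtest x = true}).toReal ≤ α) ∧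
            v = sSup {w : ℝ |
              ∃ P : Fin (K m) → Measure (Fin d → ℝ),
                (∀ k, IsProbabilityMeasure (P k)) ∧
                (∃ k l, k < l ∧ b * r m ≤ Vh (P k) (P l)) ∧
                w = ((Measure.pi fun i : Σ k : Fin (K m), Fin (n m k) => P i.1)
                      {x | φtest x = false}).toReal}}) atTop := by
  obtain ⟨t, ht, htκ, htc⟩ : ∃ t : ℝ, 0 < t ∧ t * κ₂ ≤ 1 ∧ t ^ 2 * c ≤ 1 / 2 := by
    have hc0 : 0 < c := by linarith
    refine ⟨min (1 / κ₂) (1 / (2 * c)), by positivity, ?_, ?_⟩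
    · rw [← le_div_iff₀ hκ₂]
      exact min_le_left _ _
    · have h1 : min (1 / κ₂) (1 / (2 * c)) ≤ 1 / (2 * c) := min_le_right _ _
      have h0 : 0 < min (1 / κ₂) (1 / (2 * c)) := by positivity
      have h2 : (min (1 / κ₂) (1 / (2 * c))) ^ 2 ≤ (1 / (2 * c)) ^ 2 := by gcongr
      have h3 : (1 / (2 * c)) ^ 2 * c = 1 / (4 * c) := by
        field_simp
        norm_num
      have h4 : 1 / (4 * c) ≤ 1 / 2 := by
        apply one_div_le_one_div_of_le <;> linarith
      calc _ ≤ (1 / (2 * c)) ^ 2 * c := by gcongr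
        _ ≤ _ := by rw [h3]; exact h4
  refine ⟨t * √(κ₁ / 2), by positivity, ?_⟩
  have hr0 : ∀ m, 0 ≤ r m := fun m => by rw [hr]; exact Real.sqrt_nonneg _
  have ha : ∀ m, t * r m ≤ 1 := fun m =>
    (mul_le_mul_of_nonneg_left (hrbd m) ht.le).trans htκ
  have ha0 : ∀ m, 0 ≤ t * r m := fun m => mul_nonneg ht.le (hr0 m)
  have hKpos : ∀ m, 0 < K m := fun m => by have := hK2 m; omega
  -- `t ^ 2 * c ≤ 1 / 2` keeps every second moment below `√K`, negligible against `K`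
  have hM : ∀ m k, (1 + (t * r m) ^ 2) ^ n m k ≤ √(K m : ℝ) := by
    intro m k
    have hKR : (0 : ℝ) < K m := by exact_mod_cast hKpos m
    have hK1 : (1 : ℝ) ≤ K m := by exact_mod_cast hKpos m
    have hlog : 0 ≤ Real.log (K m) := Real.log_nonneg hK1
    have hnm : (0 : ℝ) < nmin m := by exact_mod_cast hminpos m
    have hnk : (n m k : ℝ) ≤ c * nmin m := by
      refine le_trans ?_ (hbal m)
      exact_mod_cast (hnmax m).2 ⟨k, rfl⟩
    have hr2 : r m ^ 2 = Real.log (K m) / nmin m := by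
      rw [hr, Real.sq_sqrt (by positivity)]
    calc (1 + (t * r m) ^ 2) ^ n m k ≤ (Real.exp ((t * r m) ^ 2)) ^ n m k := by
          gcongr
          linarith [Real.add_one_le_exp ((t * r m) ^ 2)]
      _ = Real.exp (n m k * (t * r m) ^ 2) := (Real.exp_nat_mul _ _).symm
      _ ≤ Real.exp (Real.log (K m) / 2) := by
          gcongr
          calc (n m k : ℝ) * (t * r m) ^ 2 ≤ (c * nmin m) * (t * r m) ^ 2 := by gcongr
            _ = (t ^ 2 * c) * Real.log (K m) := by
                rw [mul_pow, hr2]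
                field_simp
            _ ≤ 1 / 2 * Real.log (K m) := by gcongr
            _ = _ := by ring
      _ = √(K m : ℝ) := by
          rw [Real.exp_half, Real.exp_log hKR]
  have hsep : ∀ m (a a' : ℝ), (a - a') ^ 2 = (t * r m) ^ 2 → -1 ≤ a → a ≤ 1 → -1 ≤ a' → a' ≤ 1 →
      t * √(κ₁ / 2) * r m ≤ Vh (twoPoint 0 z a) (twoPoint 0 z a') := by
    intro m a a' h h1 h2 h1' h2'
    rw [hVh, mmd_twoPoint φ₀ hsymm z h1 h2 h1' h2', h]
    apply Real.le_sqrt_of_sq_le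
    have e : (t * √(κ₁ / 2) * r m) ^ 2 = (t * r m) ^ 2 / 2 * κ₁ := by
      rw [mul_pow, mul_pow, Real.sq_sqrt (by positivity)]
      ring
    rw [e]
    gcongr
  -- the bound on type II errors by `1`, which makes the suprema below genuine
  have hle1 : ∀ m (T : ((Σ k : Fin (K m), Fin (n m k)) → (Fin d → ℝ)) → Bool),
      ∀ w ∈ {w : ℝ | ∃ P : Fin (K m) → Measure (Fin d → ℝ),
        (∀ k, IsProbabilityMeasure (P k)) ∧
        (∃ k l, k < l ∧ t * √(κ₁ / 2) * r m ≤ Vh (P k) (P l)) ∧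
        w = ((Measure.pi fun i : Σ k : Fin (K m), Fin (n m k) => P i.1)
              {x | T x = false}).toReal}, w ≤ 1 := by
    rintro m T w ⟨P, hP, -, rfl⟩
    exact measureReal_le_one
  have hlow : ∀ m (T : ((Σ k : Fin (K m), Fin (n m k)) → (Fin d → ℝ)) → Bool), Measurable T →
      (∀ Q : Measure (Fin d → ℝ), IsProbabilityMeasure Q →
        ((Measure.pi fun _ : Σ k : Fin (K m), Fin (n m k) => Q) {x | T x = true}).toReal ≤ α) →
      1 - α - √(√(K m : ℝ) / K m) ≤ sSup {w : ℝ | ∃ P : Fin (K m) → Measure (Fin d → ℝ),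
        (∀ k, IsProbabilityMeasure (P k)) ∧
        (∃ k l, k < l ∧ t * √(κ₁ / 2) * r m ≤ Vh (P k) (P l)) ∧
        w = ((Measure.pi fun i : Σ k : Fin (K m), Fin (n m k) => P i.1)
              {x | T x = false}).toReal} := by
    intro m T hT hlevel
    have hKR : (0 : ℝ) < K m := by exact_mod_cast hKpos m
    refine (average_typeII_ge (0 : Fin d → ℝ) z (hKpos m) (n m)
      (by linarith [ha0 m]) (ha m) (hM m) T hT hlevel).trans ?_
    rw [div_le_iff₀ hKR]
    refine (Finset.sum_le_card_nsmul Finset.univ _ _ fun k _ => ?_).trans_eq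
      (by rw [Finset.card_univ, Fintype.card_fin, nsmul_eq_mul, mul_comm])
    refine le_csSup ⟨1, hle1 m T⟩
      ⟨fun j => twoPoint 0 z (if j = k then t * r m else 0), fun j => ?_, ?_, rfl⟩
    · have := ha m
      have := ha0 m
      exact twoPoint_isProb _ _ (by split_ifs <;> linarith) (by split_ifs <;> linarith)
    · have : Nontrivial (Fin (K m)) := Fin.nontrivial_iff_two_le.2 (hK2 m)
      obtain ⟨l, hl⟩ := exists_ne k
      have h1 := ha m
      have h0 := ha0 m
      rcases lt_or_gt_of_ne hl with hlt | hlt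
      · refine ⟨l, k, hlt, ?_⟩
        simp only [hl, if_true, if_false]
        apply hsep <;> linarith
      · refine ⟨k, l, hlt, ?_⟩
        simp only [hl, if_true, if_false]
        apply hsep <;> linarith
  -- the test that never rejects shows that the infimum is over a nonempty set
  have htriv : ∀ m (Q : Measure (Fin d → ℝ)), IsProbabilityMeasure Q →
      ((Measure.pi fun _ : Σ k : Fin (K m), Fin (n m k) => Q)
        {_x | false = true}).toReal ≤ α := fun m Q _ => by simpa using hα0.le
  have hlim : Tendsto (fun m => 1 - α - √(√(K m : ℝ) / K m)) atTop (nhds (1 - α)) := by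
    have hK : Tendsto (fun m => (K m : ℝ)) atTop atTop :=
      tendsto_natCast_atTop_atTop.comp hKtend
    have h1 : Tendsto (fun m => √(√(K m : ℝ) / K m)) atTop (nhds 0) := by
      have h2 : Tendsto (fun m => (√(K m : ℝ))⁻¹) atTop (nhds 0) :=
        tendsto_inv_atTop_zero.comp (Real.tendsto_sqrt_atTop.comp hK)
      have h3 := (Real.continuous_sqrt.tendsto 0).comp h2
      simpa [Function.comp_def, Real.sqrt_div_self] using h3
    simpa using tendsto_const_nhds.sub h1
  refine le_liminf_of_le (isCoboundedUnder_ge_of_le (x := 1) _ fun m => ?_) ?_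
  · refine csInf_le_of_le ⟨0, ?_⟩ ⟨fun _ => false, measurable_const, htriv m, rfl⟩ ?_
    · rintro v ⟨T, -, -, rfl⟩
      apply Real.sSup_nonneg
      rintro w ⟨P, -, -, rfl⟩
      exact ENNReal.toReal_nonneg
    · exact Real.sSup_le (hle1 m _) zero_le_one
  · filter_upwards [hlim.eventually_const_lt hζ] with m hm
    refine le_csInf ⟨_, fun _ => false, measurable_const, htriv m, rfl⟩ ?_
    rintro v ⟨T, hT, hlevel, rfl⟩
    exact hm.le.trans (hlow m T hT hlevel)
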